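/- arXiv:1312.2185 — 4 statements merged into one kernel-verified Lean document; each statement's English description precedes it below -/
import Mathlib

section
/- There is an absolute constant C such that every path-restricted ordered bipartite graph G = (U, V, E) with n = |U| + |V| vertices (n ≥ 2) has at most n·log₂ n + C·n edges. -/
open List

/-- Adjacency relation of the bipartite graph with edge set `E ⊆ U × V`,
on the disjoint union of the two sides. -/
def BipAdj {α β : Type*} (E : Set (α × β)) : (α ⊕ β) → (α ⊕ β) → Prop
  | Sum.inl u, Sum.inr v => (u, v) ∈ E
  | Sum.inr v, Sum.inl u => (u, v) ∈ E
  | _, _ => False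

/-- The `U`-vertices visited by a walk, in order of traversal. -/
def uVerts {α β : Type*} (ws : List (α ⊕ β)) : List α := ws.filterMap Sum.getLeft?

/-- The `V`-vertices visited by a walk, in order of traversal. -/
def vVerts {α β : Type*} (ws : List (α ⊕ β)) : List β := ws.filterMap Sum.getRight?

/-- A (nonempty, simple) path in the bipartite graph with edge set `E`. -/
def IsPathList {α β : Type*} (E : Set (α × β)) (ws : List (α ⊕ β)) : Prop :=
  ws ≠ [] ∧ ws.Chain' (BipAdj E) ∧ ws.Nodup

/-- A forward path: a path whose `U`-vertices and `V`-vertices are both visited in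
strictly increasing order, or both in strictly decreasing order. -/
def IsForwardPath {α β : Type*} [Preorder α] [Preorder β]
    (E : Set (α × β)) (ws : List (α ⊕ β)) : Prop :=
  IsPathList E ws ∧
    (((uVerts ws).Chain' (· < ·) ∧ (vVerts ws).Chain' (· < ·)) ∨
      ((uVerts ws).Chain' (· > ·) ∧ (vVerts ws).Chain' (· > ·)))

/-- The internal (degree-two) vertices of a path: all but the two endpoints. -/
def internalVerts {α β : Type*} (ws : List (α ⊕ β)) : List (α ⊕ β) := (ws.drop 1).dropLast

/-- `x` is a least element of the list `l`. -/
def ListLeast {γ : Type*} [Preorder γ] (l : List γ) (x : γ) : Prop :=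
  x ∈ l ∧ ∀ y ∈ l, x ≤ y

/-- `x` is a greatest element of the list `l`. -/
def ListGreatest {γ : Type*} [Preorder γ] (l : List γ) (x : γ) : Prop :=
  x ∈ l ∧ ∀ y ∈ l, y ≤ x

/-- The forward path `ws` has a back edge: an edge of `G` joining the smallest
`U`-vertex `u_a` of `ws` to a vertex `v_j ∈ [v_c, v_d]` strictly greater than the smallest
internal `V`-vertex of `ws`, or an edge joining the smallest `V`-vertex `v_c` of `ws` to a
vertex `u_i ∈ [u_a, u_b]` strictly greater than the smallest internal `U`-vertex of `ws`. -/
def HasBackEdge {α β : Type*} [Preorder α] [Preorder β]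
    (E : Set (α × β)) (ws : List (α ⊕ β)) : Prop :=
  (∃ ua vc vd vint vj,
      ListLeast (uVerts ws) ua ∧ ListLeast (vVerts ws) vc ∧ ListGreatest (vVerts ws) vd ∧
      ListLeast (vVerts (internalVerts ws)) vint ∧
      (ua, vj) ∈ E ∧ vc ≤ vj ∧ vj ≤ vd ∧ vint < vj) ∨
  (∃ vc ua ub uint ui,
      ListLeast (vVerts ws) vc ∧ ListLeast (uVerts ws) ua ∧ ListGreatest (uVerts ws) ub ∧
      ListLeast (uVerts (internalVerts ws)) uint ∧
      (ui, vc) ∈ E ∧ ua ≤ ui ∧ ui ≤ ub ∧ uint < ui)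

/-- A path-restricted ordered bipartite graph: no forward path has a back edge. -/
def IsPRBG {α β : Type*} [Preorder α] [Preorder β] (E : Set (α × β)) : Prop :=
  ∀ ws : List (α ⊕ β), IsForwardPath E ws → ¬ HasBackEdge E ws

/-!
Only forward paths with four vertices `u, v, u', w` are needed. Fix an edge `(u, v)`; let `gap` be
the distance from `v` to the next neighbour of `u`, and `reach` the distance from `v` to the last
neighbour of `u`. Each `u` has one edge of reach zero. Moving to a later edge at `u` at least halves
the reach as long as `reach ≤ 2 * gap`, so each `u` has at most `log₂ |V| + 1` such edges. For the
remaining edges `2 * gap < reach`; if `u < u'` are both adjacent to `v`, then the next neighbour of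
`u` lies beyond every neighbour of `u'`, so the gap of `(u, v)` is more than twice that of
`(u', v)`, and each `v` has at most `log₂ |V| + 1` such edges.
-/

/-- No forward path `u, v, u', w` has a back edge at `u`: once two vertices `u < u'` share a
neighbour `v`, all neighbours of `u` beyond `v` lie beyond all neighbours of `u'`. The order
`v < w` along the path is left out, as `w ≤ v < x` already gives `w < x`. -/
def NoShortBackEdge {α β : Type*} [LT α] [LT β] (E : Set (α × β)) : Prop :=
  ∀ ⦃u u' : α⦄ ⦃v w x : β⦄, u < u' → (u, v) ∈ E → (u', v) ∈ E → (u', w) ∈ E →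
    (u, x) ∈ E → v < x → w < x

theorem IsPRBG.noShortBackEdge {α β : Type*} [Preorder α] [LinearOrder β] {E : Set (α × β)}
    (hE : IsPRBG E) : NoShortBackEdge E := by
  intro u u' v w x hu huv hu'v hu'w hux hvx
  by_contra! hxw
  have hvw : v < w := hvx.trans_le hxw
  have forward : IsForwardPath E [Sum.inl u, Sum.inr v, Sum.inl u', Sum.inr w] := by
    refine ⟨⟨List.cons_ne_nil _ _, ?_, ?_⟩, Or.inl ⟨?_, ?_⟩⟩
    · change List.IsChain _ _
      simp [BipAdj, huv, hu'v, hu'w]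
    · simp [hu.ne, hvw.ne]
    · change List.IsChain (· < ·) [u, u']
      simpa using hu
    · change List.IsChain (· < ·) [v, w]
      simpa using hvw
  refine hE _ forward (Or.inl ⟨u, v, w, v, x, ?_⟩)
  simp [uVerts, vVerts, internalVerts, ListLeast, ListGreatest, hu.le, hvw.le, hux, hvx.le, hxw,
    hvx]

theorem NoShortBackEdge.image_prodMap_id {α β γ : Type*} [LT α] [LinearOrder β]
    [Preorder γ] {E : Set (α × β)} {r : β → γ} (hE : NoShortBackEdge E)
    (hr : StrictMonoOn r (Prod.snd '' E)) : NoShortBackEdge (Prod.map id r '' E) := by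
  have mem_snd {u : α} {v : β} (h : (u, v) ∈ E) : v ∈ Prod.snd '' E := ⟨(u, v), h, rfl⟩
  rintro u u' _ _ _ hu ⟨⟨_, v⟩, huv, ⟨⟩⟩ ⟨⟨_, v'⟩, hu'v, heq⟩ ⟨⟨_, w⟩, hu'w, ⟨⟩⟩
    ⟨⟨_, x⟩, hux, ⟨⟩⟩ hvx
  obtain ⟨rfl, hv'⟩ := Prod.mk.inj heq
  obtain rfl : v' = v := hr.injOn (mem_snd hu'v) (mem_snd huv) hv'
  exact hr (mem_snd hu'w) (mem_snd hux)
    (hE hu huv hu'v hu'w hux ((hr.lt_iff_lt (mem_snd huv) (mem_snd hux)).1 hvx))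

theorem exists_strictMonoOn_forall_lt_card {β : Type*} [Preorder β] (V : Finset β) :
    ∃ r : β → ℕ, StrictMonoOn r V ∧ ∀ v ∈ V, r v < V.card := by
  classical
  refine ⟨fun v => (V.filter (· < v)).card, fun v hv w _ hvw => ?_, fun v hv => ?_⟩
  · refine Finset.card_lt_card (Finset.ssubset_iff_of_subset ?_ |>.2 ⟨v, by simp_all⟩)
    exact Finset.monotone_filter_right V fun x _ (hx : x < v) => hx.trans hvw
  · exact Finset.card_lt_card (Finset.filter_ssubset.2 ⟨v, hv, lt_irrefl v⟩)

theorem log_two_lt_log_two_of_two_mul_le {a b : ℕ} (ha : 0 < a) (hab : 2 * a ≤ b) :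
    Nat.log 2 a < Nat.log 2 b :=
  calc
    Nat.log 2 a < Nat.log 2 (a * 2) := by rw [Nat.log_mul_base one_lt_two ha.ne']; lia
    _ ≤ Nat.log 2 b := Nat.log_mono_right (by lia)

theorem card_le_card_mul_log_add_one_of_doubling {ι κ : Type*} {s : Finset ι} {t : Finset κ}
    {key : ι → κ} {f : ι → ℕ} {m : ℕ} (hkey : ∀ i ∈ s, key i ∈ t) (hpos : ∀ i ∈ s, 0 < f i)
    (hle : ∀ i ∈ s, f i ≤ m)
    (hdouble : ∀ i ∈ s, ∀ j ∈ s, i ≠ j → key i = key j → 2 * f i ≤ f j ∨ 2 * f j ≤ f i) :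
    s.card ≤ t.card * (Nat.log 2 m + 1) := by
  calc
    s.card ≤ (t ×ˢ Finset.range (Nat.log 2 m + 1)).card := by
      refine Finset.card_le_card_of_injOn (fun i => (key i, Nat.log 2 (f i)))
        (fun i hi => ?_) (fun i hi j hj hij => ?_)
      · simpa [Nat.lt_succ_iff] using And.intro (hkey i hi) (Nat.log_mono_right (hle i hi))
      · obtain ⟨hkeys, hlogs⟩ := Prod.mk.inj hij
        by_contra hne
        rcases hdouble i hi j hj hne hkeys with h | h
        · exact (log_two_lt_log_two_of_two_mul_le (hpos i hi) h).ne hlogs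
        · exact (log_two_lt_log_two_of_two_mul_le (hpos j hj) h).ne' hlogs
    _ = t.card * (Nat.log 2 m + 1) := by simp

section NatColumns

variable {α : Type*} {E : Finset (α × ℕ)} {u u' : α} {v w m : ℕ} {p : α × ℕ}

/-- The distance from the `V`-endpoint of the edge `p` to the next neighbour of its `U`-endpoint, or
`0` if there is none. -/
noncomputable def gap (E : Finset (α × ℕ)) (p : α × ℕ) : ℕ :=
  sInf {d | 0 < d ∧ (p.1, p.2 + d) ∈ E}

theorem gap_le (hvw : v < w) (hw : (u, w) ∈ E) : gap E (u, v) ≤ w - v :=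
  Nat.sInf_le ⟨Nat.sub_pos_of_lt hvw, by rwa [Nat.add_sub_cancel' hvw.le]⟩

variable [DecidableEq α]

/-- The largest neighbour of `u` in the graph with edge set `E`, or `0` if `u` is isolated. -/
def lastNeighbor (E : Finset (α × ℕ)) (u : α) : ℕ := (E.filter (·.1 = u)).sup Prod.snd

/-- The distance from the `V`-endpoint of the edge `p` to the last neighbour of its `U`-endpoint. -/
def reach (E : Finset (α × ℕ)) (p : α × ℕ) : ℕ := lastNeighbor E p.1 - p.2

theorem le_lastNeighbor (h : (u, v) ∈ E) : v ≤ lastNeighbor E u :=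
  Finset.le_sup (f := Prod.snd) (b := (u, v)) (Finset.mem_filter.2 ⟨h, rfl⟩)

theorem mk_lastNeighbor_mem (h : (u, v) ∈ E) : (u, lastNeighbor E u) ∈ E := by
  have nonempty : (E.filter (·.1 = u)).Nonempty := ⟨(u, v), Finset.mem_filter.2 ⟨h, rfl⟩⟩
  obtain ⟨⟨u₀, w⟩, hw, hlast⟩ := Finset.exists_mem_eq_sup _ nonempty Prod.snd
  obtain ⟨hmem, rfl⟩ := Finset.mem_filter.1 hw
  rwa [lastNeighbor, hlast]

theorem add_reach (h : (u, v) ∈ E) : v + reach E (u, v) = lastNeighbor E u :=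
  Nat.add_sub_cancel' (le_lastNeighbor h)

theorem mk_add_reach_mem (h : (u, v) ∈ E) : (u, v + reach E (u, v)) ∈ E :=
  add_reach h ▸ mk_lastNeighbor_mem h

theorem reach_lt (hm : ∀ p ∈ E, p.2 < m) (hp : p ∈ E) : reach E p < m :=
  (Nat.sub_le _ _).trans_lt (hm _ (mk_lastNeighbor_mem (v := p.2) hp))

theorem gap_pos_and_mk_add_gap_mem (h : (u, v) ∈ E) (hreach : 0 < reach E (u, v)) :
    0 < gap E (u, v) ∧ (u, v + gap E (u, v)) ∈ E :=
  Nat.sInf_mem (s := {d | 0 < d ∧ (u, v + d) ∈ E}) ⟨_, hreach, mk_add_reach_mem h⟩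

theorem two_mul_reach_le_of_lt (hvw : v < w) (hw : (u, w) ∈ E)
    (hlong : reach E (u, v) ≤ 2 * gap E (u, v)) : 2 * reach E (u, w) ≤ reach E (u, v) := by
  have := gap_le hvw hw
  have := le_lastNeighbor hw
  unfold reach at *
  lia

theorem two_mul_gap_le_of_lt [LT α] (hE : NoShortBackEdge (E : Set (α × ℕ))) (hu : u < u')
    (huv : (u, v) ∈ E) (hu'v : (u', v) ∈ E) (hreach : 0 < reach E (u, v))
    (hshort : 2 * gap E (u', v) < reach E (u', v)) : 2 * gap E (u', v) ≤ gap E (u, v) := by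
  obtain ⟨gap_pos, mem⟩ := gap_pos_and_mk_add_gap_mem huv hreach
  have : v + reach E (u', v) < v + gap E (u, v) :=
    hE hu huv hu'v (mk_add_reach_mem hu'v) mem (Nat.lt_add_of_pos_right gap_pos)
  lia

theorem card_filter_reach_eq_zero_le {U : Finset α} (hU : ∀ p ∈ E, p.1 ∈ U) :
    (E.filter (reach E · = 0)).card ≤ U.card := by
  refine Finset.card_le_card_of_injOn Prod.fst
    (fun p hp => hU p (Finset.mem_filter.1 hp).1) ?_
  rintro ⟨u, v⟩ hv ⟨_, w⟩ hw ⟨⟩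
  obtain ⟨hv, hv0⟩ := Finset.mem_filter.1 hv
  obtain ⟨hw, hw0⟩ := Finset.mem_filter.1 hw
  have := add_reach hv
  have := add_reach hw
  exact Prod.ext rfl (by lia)

theorem card_filter_reach_le_two_mul_gap_le {U : Finset α} (hU : ∀ p ∈ E, p.1 ∈ U)
    (hm : ∀ p ∈ E, p.2 < m) :
    (E.filter fun p => 0 < reach E p ∧ reach E p ≤ 2 * gap E p).card ≤
      U.card * (Nat.log 2 m + 1) := by
  refine card_le_card_mul_log_add_one_of_doubling (key := Prod.fst) (f := reach E)
    ?_ ?_ ?_ ?_ <;> simp only [Finset.mem_filter]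
  · exact fun p hp => hU p hp.1
  · exact fun p hp => hp.2.1
  · exact fun p hp => (reach_lt hm hp.1).le
  · rintro ⟨u, v⟩ ⟨hv, -, hv_long⟩ ⟨_, w⟩ ⟨hw, -, hw_long⟩ hne ⟨⟩
    rcases lt_or_gt_of_ne (show v ≠ w by rintro rfl; exact hne rfl) with hvw | hwv
    · exact Or.inr (two_mul_reach_le_of_lt hvw hw hv_long)
    · exact Or.inl (two_mul_reach_le_of_lt hwv hv hw_long)

end NatColumns

section PatternCount

variable {α : Type*} [LinearOrder α]

theorem card_filter_two_mul_gap_lt_reach_le {E : Finset (α × ℕ)} {m : ℕ}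
    (hE : NoShortBackEdge (E : Set (α × ℕ))) (hm : ∀ p ∈ E, p.2 < m) :
    (E.filter fun p => 2 * gap E p < reach E p).card ≤ m * (Nat.log 2 m + 1) := by
  suffices (E.filter fun p => 2 * gap E p < reach E p).card ≤
      (Finset.range m).card * (Nat.log 2 m + 1) by rwa [Finset.card_range] at this
  refine card_le_card_mul_log_add_one_of_doubling (key := Prod.snd) (f := gap E)
    ?_ ?_ ?_ ?_ <;> simp only [Finset.mem_filter]
  · exact fun p hp => Finset.mem_range.2 (hm p hp.1)
  · exact fun p hp => (gap_pos_and_mk_add_gap_mem hp.1 (Nat.zero_lt_of_lt hp.2)).1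
  · intro p hp
    have := reach_lt hm hp.1
    lia
  · rintro ⟨u, v⟩ ⟨hu, hu_short⟩ ⟨u', _⟩ ⟨hu', hu'_short⟩ hne ⟨⟩
    rcases lt_or_gt_of_ne (show u ≠ u' by rintro rfl; exact hne rfl) with huu' | hu'u
    · exact Or.inr (two_mul_gap_le_of_lt hE huu' hu hu' (Nat.zero_lt_of_lt hu_short) hu'_short)
    · exact Or.inl (two_mul_gap_le_of_lt hE hu'u hu' hu (Nat.zero_lt_of_lt hu'_short) hu_short)

theorem NoShortBackEdge.card_le_of_nat {E : Finset (α × ℕ)} {U : Finset α} {m : ℕ}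
    (hE : NoShortBackEdge (E : Set (α × ℕ))) (hU : ∀ p ∈ E, p.1 ∈ U) (hm : ∀ p ∈ E, p.2 < m) :
    E.card ≤ U.card + (U.card + m) * (Nat.log 2 m + 1) := by
  have cover : E ⊆ E.filter (reach E · = 0) ∪
      (E.filter (fun p => 0 < reach E p ∧ reach E p ≤ 2 * gap E p) ∪
        E.filter fun p => 2 * gap E p < reach E p) := by
    intro p hp
    simp only [Finset.mem_union, Finset.mem_filter, hp, true_and]
    lia
  calc
    E.card ≤ (E.filter (reach E · = 0)).card +
        ((E.filter fun p => 0 < reach E p ∧ reach E p ≤ 2 * gap E p).card +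
          (E.filter fun p => 2 * gap E p < reach E p).card) := by
      grw [Finset.card_le_card cover, Finset.card_union_le, Finset.card_union_le]
    _ ≤ U.card + (U.card * (Nat.log 2 m + 1) + m * (Nat.log 2 m + 1)) :=
      Nat.add_le_add (card_filter_reach_eq_zero_le hU)
        (Nat.add_le_add (card_filter_reach_le_two_mul_gap_le hU hm)
          (card_filter_two_mul_gap_lt_reach_le hE hm))
    _ = U.card + (U.card + m) * (Nat.log 2 m + 1) := by rw [Nat.add_mul]

theorem NoShortBackEdge.card_le {β : Type*} [LinearOrder β] {E : Finset (α × β)} {U : Finset α}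
    {V : Finset β} (hE : NoShortBackEdge (E : Set (α × β))) (hUV : E ⊆ U ×ˢ V) :
    E.card ≤ U.card + (U.card + V.card) * (Nat.log 2 V.card + 1) := by
  obtain ⟨r, hr, hr_lt⟩ := exists_strictMonoOn_forall_lt_card V
  have hU (p) (hp : p ∈ E) : p.1 ∈ U := (Finset.mem_product.1 (hUV hp)).1
  have hV (p) (hp : p ∈ E) : p.2 ∈ V := (Finset.mem_product.1 (hUV hp)).2
  have inj : Set.InjOn (Prod.map id r) (E : Set (α × β)) := fun p hp q hq hpq =>
    Prod.ext (Prod.mk.inj hpq).1 (hr.injOn (hV p hp) (hV q hq) (Prod.mk.inj hpq).2)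
  rw [← Finset.card_image_of_injOn inj]
  apply NoShortBackEdge.card_le_of_nat
  · rw [Finset.coe_image]
    exact hE.image_prodMap_id (hr.mono (Set.image_subset_iff.2 hV))
  · exact Finset.forall_mem_image.2 hU
  · exact Finset.forall_mem_image.2 fun p hp => hr_lt _ (hV p hp)

end PatternCount

theorem prbg_edge_upper_bound_general {α β : Type*} [LinearOrder α] [LinearOrder β]
    {E : Finset (α × β)} {U : Finset α} {V : Finset β} (hE : NoShortBackEdge (E : Set (α × β)))
    (hUV : E ⊆ U ×ˢ V) :
    (E.card : ℝ) ≤ (U.card + V.card : ℝ) * Real.logb 2 (U.card + V.card) +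
      2 * (U.card + V.card) := by
  have count : (E.card : ℝ) ≤ U.card + (U.card + V.card) * (Nat.log 2 V.card + 1) :=
    mod_cast hE.card_le hUV
  have log_le : (Nat.log 2 V.card : ℝ) ≤ Real.logb 2 (U.card + V.card) :=
    calc
      (Nat.log 2 V.card : ℝ) ≤ Nat.log 2 (U.card + V.card) :=
        mod_cast Nat.log_mono_right (Nat.le_add_left _ _)
      _ ≤ Real.logb 2 (U.card + V.card) := mod_cast Real.natLog_le_logb (U.card + V.card) 2
  calc
    (E.card : ℝ) ≤ U.card + (U.card + V.card) * (Nat.log 2 V.card + 1) := count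
    _ ≤ (U.card + V.card) + (U.card + V.card) * (Real.logb 2 (U.card + V.card) + 1) := by
      gcongr
      exact le_add_of_nonneg_right V.card.cast_nonneg
    _ = _ := by ring

/-- There is an absolute constant `C` such that every path-restricted ordered bipartite
graph `G = (U, V, E)` with `n = |U| + |V|` vertices (`n ≥ 2`) has at most
`n · log₂ n + C · n` edges. -/
theorem prbg_edge_upper_bound :
    ∃ C : ℝ, ∀ (α β : Type) [LinearOrder α] [LinearOrder β] [Fintype α] [Fintype β]
      (E : Finset (α × β)),
      2 ≤ Fintype.card α + Fintype.card β →
      IsPRBG (E : Set (α × β)) →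
      (E.card : ℝ) ≤
        (Fintype.card α + Fintype.card β : ℝ) *
            Real.logb 2 (Fintype.card α + Fintype.card β) +
          C * (Fintype.card α + Fintype.card β) :=
  ⟨2, fun _ _ _ _ _ _ _ _ hE => prbg_edge_upper_bound_general hE.noShortBackEdge
    (Finset.subset_univ _)⟩
end

section
/- There is an absolute constant C such that for every set P of n points in convex position in the Euclidean plane (n ≥ 2), the number of pairs {p, q} ⊆ P at Euclidean distance exactly 1 is at most 2n·log₂ n + C·n. -/
/-- A finite set of points in the plane is in convex position if every point of the set is an
extreme point of its convex hull. -/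
def ConvexPosition (P : Set (EuclideanSpace ℝ (Fin 2))) : Prop :=
  ∀ p ∈ P, p ∈ (convexHull ℝ P).extremePoints ℝ

/-!
The points in convex position are circularly ordered by orientation. For any two of them, the
angles at both ends on one of the two sides of their connecting line sum to at most `π`; direct
each unit distance `p → q` so that this side is on its left.

Suppose that `p, q₀, q, p'` occur in this circular order and `p → q₀`, `p → q`, `p' → q` are
directed unit distances. The angle condition makes the angle at `q` between `p'` and `q₀` obtuse,
whereas for every further `p' → q₀'` the angle at `q` between `p'` and `q₀'` is a base angle of an
isosceles triangle, hence acute. So the gap from `q₀'` to `q` contains the gap from `q₀` to `q`.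

Call the span of `p → q` the largest gap from an out-neighbour of `p` preceding `q` to `q`. If all
these gaps are at least half the span, then the spans of such edges at a fixed tail `p` at least
double from one edge to the next. If some gap is less than half the span, the containment of gaps
shows the same at a fixed head `q`. Spans are at most `n`, so each point is the tail of
`log₂ n + O(1)` edges of the first kind and the head of as many of the second kind.
-/

open Module

/-! ### Counting with doubling weights -/

lemma size_lt_size_of_two_mul_le {a b : ℕ} (hb : 0 < b) (hab : 2 * a ≤ b) :
    a.size < b.size := by
  rcases a.eq_zero_or_pos with rfl | ha
  · simpa only [Nat.size_zero, Nat.size_pos] using hb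
  · rw [Nat.lt_size]
    have hpow : 2 ^ (a.size - 1) ≤ a := Nat.lt_size.1 (Nat.sub_one_lt (Nat.size_pos.2 ha).ne')
    calc 2 ^ a.size = 2 * 2 ^ (a.size - 1) := (mul_pow_sub_one (Nat.size_pos.2 ha).ne' 2).symm
      _ ≤ b := by omega

lemma ncard_le_of_doubling {β κ : Type*} [Finite κ] {s : Set β} (key : β → κ) (weight : β → ℕ)
    (n : ℕ) (hweight : ∀ e ∈ s, weight e ≤ n)
    (hdouble : ∀ e ∈ s, ∀ e' ∈ s, e ≠ e' → key e = key e' →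
      0 < weight e' ∧ 2 * weight e ≤ weight e' ∨ 0 < weight e ∧ 2 * weight e' ≤ weight e) :
    s.ncard ≤ Nat.card κ * (n.size + 1) := by
  have hmaps : ∀ e ∈ s, (key e, (weight e).size) ∈ Set.univ ×ˢ Set.Iic n.size :=
    fun e he => ⟨Set.mem_univ _, Nat.size_le_size (hweight e he)⟩
  have hinj : Set.InjOn (fun e => (key e, (weight e).size)) s := by
    intro e he e' he' heq
    obtain ⟨hkey, hsize⟩ := Prod.mk.inj heq
    by_contra hne
    rcases hdouble e he e' he' hne hkey with ⟨hpos, h⟩ | ⟨hpos, h⟩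
    · exact (size_lt_size_of_two_mul_le hpos h).ne hsize
    · exact (size_lt_size_of_two_mul_le hpos h).ne' hsize
  calc s.ncard ≤ (Set.univ ×ˢ Set.Iic n.size : Set (κ × ℕ)).ncard :=
        Set.ncard_le_ncard_of_injOn _ hmaps hinj (Set.finite_univ.prod (Set.finite_Iic _))
    _ = Nat.card κ * (n.size + 1) := by
        rw [Set.ncard_prod, Set.ncard_univ, ← Finset.coe_Iic, Set.ncard_coe_finset, Nat.card_Iic]

lemma size_le_logb_add_one (n : ℕ) : (n.size : ℝ) ≤ Real.logb 2 n + 1 := by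
  rcases n.eq_zero_or_pos with rfl | hn
  · simp
  · have hpow : 2 ^ (n.size - 1) ≤ n := Nat.lt_size.1 (Nat.sub_one_lt (Nat.size_pos.2 hn).ne')
    have hlog : ((n.size - 1 : ℕ) : ℝ) ≤ Real.logb 2 n := by
      rw [Real.le_logb_iff_rpow_le one_lt_two (by exact_mod_cast hn), Real.rpow_natCast]
      exact_mod_cast hpow
    rw [Nat.cast_pred (Nat.size_pos.2 hn)] at hlog
    linarith

/-! ### Relations on circular orders -/

lemma sbtw_or_sbtw_of_ne {α : Type*} [CircularOrder α] {x y z : α} (hxy : x ≠ y) (hyz : y ≠ z)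
    (hzx : z ≠ x) : sbtw x y z ∨ sbtw z y x := by
  rw [sbtw_iff_not_btw, sbtw_iff_not_btw, ← not_and_or]
  rintro ⟨hzyx, hxyz⟩
  rcases btw_antisymm hxyz hzyx with h | h | h
  exacts [hxy h, hyz h, hzx h]

/-- The number of steps from `x` to `y` in a circular order, going from each element to the next
one. -/
noncomputable def arcLength {α : Type*} [CircularPreorder α] (x y : α) : ℕ :=
  (Set.cIoo x y).ncard + 1

section ArcLength

variable {α : Type*} [CircularPreorder α] [Finite α]

lemma arcLength_le_card (x y : α) : arcLength x y ≤ Nat.card α := by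
  have hx : x ∉ Set.cIoo x y := sbtw_irrefl_left
  exact Set.ncard_lt_card fun huniv => hx (huniv ▸ Set.mem_univ x)

lemma arcLength_add_arcLength_le {x y z : α} (h : sbtw x y z) :
    arcLength x y + arcLength y z ≤ arcLength x z := by
  have hdisj : Disjoint (Set.cIoo x y) (Set.cIoo y z) := Set.disjoint_left.2 fun w hxwy hywz =>
    (hxwy.cyclic_right.trans_right hywz).not_sbtw h.cyclic_right
  have hsub : insert y (Set.cIoo x y ∪ Set.cIoo y z) ⊆ Set.cIoo x z := by
    rintro w (rfl | hxwy | hywz)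
    exacts [h, hxwy.trans_right h, h.trans_left hywz]
  have hy : y ∉ Set.cIoo x y ∪ Set.cIoo y z := not_or.2 ⟨sbtw_irrefl_right, sbtw_irrefl_left⟩
  have hcard := Set.ncard_le_ncard hsub
  rw [Set.ncard_insert_of_notMem hy, Set.ncard_union_eq hdisj] at hcard
  unfold arcLength
  omega

end ArcLength

/-- When the heads `q` of two `R`-edges with tails `p`, `p'` coincide and `p, q, p'` are in circular
order, the gap from any earlier out-neighbour `q₀'` of `p'` to `q` contains the gap from any earlier
out-neighbour `q₀` of `p` to `q`. -/
def GapsWiden {α : Type*} [SBtw α] (R : α → α → Prop) : Prop :=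
  ∀ ⦃p p' q₀ q₀' q : α⦄, R p q₀ → R p q → R p' q₀' → R p' q →
    sbtw p q₀ q → sbtw p' q₀' q → sbtw p q p' → sbtw q₀' q₀ q

/-- The out-neighbours of `p` that precede `q` in the circular order starting at `p`. -/
noncomputable def priorNeighbors {α : Type*} [Finite α] [SBtw α] (R : α → α → Prop) (p q : α) :
    Finset α :=
  (Set.toFinite {r | R p r ∧ sbtw p r q}).toFinset

/-- The length of the longest gap from an out-neighbour of `p` preceding `q` to `q`; it is `0` if
there is no such neighbour. -/
noncomputable def gapSpan {α : Type*} [Finite α] [CircularPreorder α] (R : α → α → Prop)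
    (p q : α) : ℕ :=
  (priorNeighbors R p q).sup fun r => arcLength r q

/-- All gaps from an out-neighbour of `p` preceding `q` to `q` have equal lengths up to a
factor `2`. -/
def HasBalancedGaps {α : Type*} [Finite α] [CircularPreorder α] (R : α → α → Prop)
    (p q : α) : Prop :=
  ∀ r ∈ priorNeighbors R p q, gapSpan R p q ≤ 2 * arcLength r q

section GapSpan

variable {α : Type*} [Finite α] {R : α → α → Prop} {p p' q r : α}

lemma mem_priorNeighbors [SBtw α] : r ∈ priorNeighbors R p q ↔ R p r ∧ sbtw p r q := by
  simp [priorNeighbors]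

variable [CircularPreorder α]

lemma arcLength_le_gapSpan (hr : r ∈ priorNeighbors R p q) : arcLength r q ≤ gapSpan R p q :=
  Finset.le_sup (f := fun r => arcLength r q) hr

lemma gapSpan_pos (hr : r ∈ priorNeighbors R p q) : 0 < gapSpan R p q :=
  (Nat.succ_pos _).trans_le (arcLength_le_gapSpan hr)

lemma gapSpan_pos_of_not_hasBalancedGaps (h : ¬ HasBalancedGaps R p q) :
    0 < gapSpan R p q := by
  simp only [HasBalancedGaps, not_forall, not_le] at h
  obtain ⟨r, hr, -⟩ := h
  exact gapSpan_pos hr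

lemma gapSpan_le_card : gapSpan R p q ≤ Nat.card α :=
  Finset.sup_le fun _ _ => arcLength_le_card _ _

lemma two_mul_gapSpan_le_of_hasBalancedGaps (hq : R p q) (hpqr : sbtw p q r)
    (hr : HasBalancedGaps R p r) : 2 * gapSpan R p q ≤ gapSpan R p r := by
  suffices h : gapSpan R p q ≤ gapSpan R p r / 2 by omega
  refine Finset.sup_le fun s hs => ?_
  obtain ⟨hps, hpsq⟩ := mem_priorNeighbors.1 hs
  have hspan : arcLength s r ≤ gapSpan R p r :=
    arcLength_le_gapSpan (mem_priorNeighbors.2 ⟨hps, hpsq.trans_right hpqr⟩)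
  have hbalanced : gapSpan R p r ≤ 2 * arcLength q r := hr q (mem_priorNeighbors.2 ⟨hq, hpqr⟩)
  have hsqr : sbtw s q r := (hpqr.cyclic_left.trans_right hpsq.cyclic_right).cyclic_right
  have hadd : arcLength s q + arcLength q r ≤ arcLength s r := arcLength_add_arcLength_le hsqr
  omega

lemma two_mul_gapSpan_le_of_not_hasBalancedGaps (hR : GapsWiden R) (hp : R p q) (hp' : R p' q)
    (hpqp' : sbtw p q p') (hq : ¬ HasBalancedGaps R p' q) :
    2 * gapSpan R p q ≤ gapSpan R p' q := by
  obtain ⟨s', hs', hshort⟩ : ∃ s' ∈ priorNeighbors R p' q, 2 * arcLength s' q < gapSpan R p' q := by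
    simpa only [HasBalancedGaps, not_forall, not_le, exists_prop] using hq
  obtain ⟨hps', hs'q⟩ := mem_priorNeighbors.1 hs'
  suffices h : gapSpan R p q ≤ arcLength s' q by omega
  refine Finset.sup_le fun s hs => ?_
  obtain ⟨hps, hsq⟩ := mem_priorNeighbors.1 hs
  exact le_of_add_le_right (arcLength_add_arcLength_le (hR hps hp hps' hp' hsq hs'q hpqp'))

end GapSpan

section Counting

variable {α : Type*} [Finite α] [CircularOrder α] {R : α → α → Prop}

lemma ncard_hasBalancedGaps_le (hirrefl : ∀ x, ¬ R x x) :
    {e : α × α | R e.1 e.2 ∧ HasBalancedGaps R e.1 e.2}.ncard ≤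
      Nat.card α * ((Nat.card α).size + 1) := by
  refine ncard_le_of_doubling Prod.fst (fun e => gapSpan R e.1 e.2) _
    (fun _ _ => gapSpan_le_card) ?_
  rintro ⟨p, q⟩ ⟨hq, hq_bal⟩ ⟨_, r⟩ ⟨hr, hr_bal⟩ hne rfl
  dsimp only at *
  have hpq : p ≠ q := by rintro rfl; exact hirrefl _ hq
  have hrp : r ≠ p := by rintro rfl; exact hirrefl _ hr
  have hqr : q ≠ r := by rintro rfl; exact hne rfl
  rcases sbtw_or_sbtw_of_ne hpq hqr hrp with h | h
  · exact .inl ⟨gapSpan_pos (mem_priorNeighbors.2 ⟨hq, h⟩),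
      two_mul_gapSpan_le_of_hasBalancedGaps hq h hr_bal⟩
  · have hprq : sbtw p r q := h.cyclic_right
    exact .inr ⟨gapSpan_pos (mem_priorNeighbors.2 ⟨hr, hprq⟩),
      two_mul_gapSpan_le_of_hasBalancedGaps hr hprq hq_bal⟩

lemma ncard_not_hasBalancedGaps_le (hirrefl : ∀ x, ¬ R x x) (hR : GapsWiden R) :
    {e : α × α | R e.1 e.2 ∧ ¬ HasBalancedGaps R e.1 e.2}.ncard ≤
      Nat.card α * ((Nat.card α).size + 1) := by
  refine ncard_le_of_doubling Prod.snd (fun e => gapSpan R e.1 e.2) _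
    (fun _ _ => gapSpan_le_card) ?_
  rintro ⟨p, q⟩ ⟨hp, hp_unbal⟩ ⟨p', _⟩ ⟨hp', hp'_unbal⟩ hne rfl
  dsimp only at *
  have hpq : p ≠ q := by rintro rfl; exact hirrefl _ hp
  have hqp' : q ≠ p' := by rintro rfl; exact hirrefl _ hp'
  have hpp' : p' ≠ p := by rintro rfl; exact hne rfl
  rcases sbtw_or_sbtw_of_ne hpq hqp' hpp' with h | h
  · exact .inl ⟨gapSpan_pos_of_not_hasBalancedGaps hp'_unbal,
      two_mul_gapSpan_le_of_not_hasBalancedGaps hR hp hp' h hp'_unbal⟩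
  · exact .inr ⟨gapSpan_pos_of_not_hasBalancedGaps hp_unbal,
      two_mul_gapSpan_le_of_not_hasBalancedGaps hR hp' hp h hp_unbal⟩

theorem ncard_le_of_gapsWiden (hirrefl : ∀ x, ¬ R x x) (hR : GapsWiden R) :
    {e : α × α | R e.1 e.2}.ncard ≤ 2 * (Nat.card α * ((Nat.card α).size + 1)) := by
  have hcover : {e : α × α | R e.1 e.2} = {e | R e.1 e.2 ∧ HasBalancedGaps R e.1 e.2} ∪
      {e | R e.1 e.2 ∧ ¬ HasBalancedGaps R e.1 e.2} := by
    ext e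
    simp only [Set.mem_ofPred_eq, Set.mem_union, ← and_or_left, em, and_true]
  rw [hcover, two_mul]
  exact (Set.ncard_union_le _ _).trans
    (add_le_add (ncard_hasBalancedGaps_le hirrefl) (ncard_not_hasBalancedGaps_le hirrefl hR))

end Counting


/-! ### Convexly independent families -/

section ConvexIndependent

variable {𝕜 E ι : Type*} [Field 𝕜] [LinearOrder 𝕜] [IsStrictOrderedRing 𝕜] [AddCommGroup E]
  [Module 𝕜 E] {p : ι → E}

lemma sum_smul_sub_ne_zero_of_convexIndependent (hp : ConvexIndependent 𝕜 p) {κ : Type*}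
    {t : Finset κ} {w : κ → 𝕜} {f : κ → ι} {i : ι} (hw : ∀ k ∈ t, 0 ≤ w k)
    (hpos : 0 < ∑ k ∈ t, w k) (hf : ∀ k ∈ t, f k ≠ i) :
    ∑ k ∈ t, w k • (p (f k) - p i) ≠ 0 := by
  intro hzero
  have hcenter : t.centerMass w (p ∘ f) = p i := by
    simp only [smul_sub, Finset.sum_sub_distrib, ← Finset.sum_smul, sub_eq_zero] at hzero
    rw [Finset.centerMass, Function.comp_def, hzero, inv_smul_smul₀ hpos.ne']
  have hhull : p i ∈ convexHull 𝕜 (p '' (f '' t)) := hcenter ▸ t.centerMass_mem_convexHull hw hpos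
    fun k hk => Set.mem_image_of_mem p (Set.mem_image_of_mem f hk)
  obtain ⟨k, hk, hki⟩ := hp _ _ hhull
  exact hf k hk hki

lemma not_wbtw_of_convexIndependent (hp : ConvexIndependent 𝕜 p) {i j k : ι} (hij : i ≠ j)
    (hjk : j ≠ k) : ¬ Wbtw 𝕜 (p i) (p j) (p k) := by
  intro hwbtw
  have hhull : p j ∈ convexHull 𝕜 (p '' {i, k}) := by
    rw [Set.image_pair, convexHull_pair]
    exact mem_segment_iff_wbtw.2 hwbtw
  rcases hp _ _ hhull with h | h
  exacts [hij h.symm, hjk h]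

lemma not_collinear_of_convexIndependent (hp : ConvexIndependent 𝕜 p) {i j k : ι} (hij : i ≠ j)
    (hjk : j ≠ k) (hki : k ≠ i) : ¬ Collinear 𝕜 {p i, p j, p k} := by
  intro hcol
  rcases hcol.wbtw_or_wbtw_or_wbtw with h | h | h
  · exact not_wbtw_of_convexIndependent hp hij hjk h
  · exact not_wbtw_of_convexIndependent hp hjk hki h
  · exact not_wbtw_of_convexIndependent hp hki hij h

end ConvexIndependent

/-! ### Vectors in an oriented plane -/

section Orientation

variable {E : Type*} [NormedAddCommGroup E] [InnerProductSpace ℝ E] [Fact (finrank ℝ E = 2)]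
  (o : Orientation ℝ E (Fin 2))

open scoped RealInnerProductSpace

local notation "ω" => o.areaForm

lemma areaForm_smul_add_smul_add_smul_eq_zero (a b c : E) :
    ω b c • a + ω c a • b + ω a b • c = 0 := by
  refine ext_inner_left ℝ fun z => ?_
  rcases eq_or_ne z 0 with rfl | hz
  · simp only [inner_zero_left]
  · refine mul_left_cancel₀ (pow_ne_zero 2 (norm_ne_zero_iff.2 hz)) ?_
    simp only [inner_add_right, real_inner_smul_right, inner_zero_right, mul_zero]
    linear_combination -⟪z, a⟫ * o.inner_mul_areaForm_sub z b c
      - ⟪z, b⟫ * o.inner_mul_areaForm_sub z c a - ⟪z, c⟫ * o.inner_mul_areaForm_sub z a b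

lemma areaForm_mul_add_mul_add_mul_eq_zero (a b c d : E) :
    ω b c * ω a d + ω c a * ω b d + ω a b * ω c d = 0 := by
  simpa only [map_add, map_smul, LinearMap.add_apply, LinearMap.smul_apply, smul_eq_mul, map_zero,
    LinearMap.zero_apply] using
    congrArg (fun v => ω v d) (areaForm_smul_add_smul_add_smul_eq_zero o a b c)

variable {o}

-- Measuring angles from `e`, the hypotheses say `arg b < arg a`, `π < arg b - arg c` and
-- `arg a - arg d < π`, so that `arg c < arg d`.
lemma areaForm_pos_of_separated {e a b c d : E} (hea : 0 < ω e a) (heb : 0 < ω e b)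
    (hce : 0 < ω c e) (hde : 0 < ω d e) (hba : 0 < ω b a) (hbc : 0 < ω b c) (hda : 0 < ω d a) :
    0 < ω c d := by
  have hac : 0 < ω a c := by
    have hplucker := areaForm_mul_add_mul_add_mul_eq_zero o e a b c
    rw [o.areaForm_swap a b, o.areaForm_swap e c, o.areaForm_swap b e] at hplucker
    refine pos_of_mul_pos_right (a := ω e b) ?_ heb.le
    linarith [mul_pos hba hce, mul_pos hea hbc]
  have hplucker := areaForm_mul_add_mul_add_mul_eq_zero o e a c d
  rw [o.areaForm_swap e d, o.areaForm_swap a d] at hplucker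
  refine pos_of_mul_pos_right (a := ω e a) ?_ hea.le
  linarith [mul_pos hac hde, mul_pos hce hda]

lemma inner_neg_of_areaForm_pos {x y z : E} (hxy : 0 < ω x y) (hyz : 0 < ω y z) (hxz : 0 < ω x z)
    (hinner : ⟪x, y⟫ ≤ 0) : ⟪x, z⟫ < 0 := by
  have hx : x ≠ 0 := by
    rintro rfl
    simp only [map_zero, LinearMap.zero_apply, lt_self_iff_false] at hxy
  have hmul : ω x y * ⟪x, z⟫ < 0 := by
    have h₁ : ⟪x, y⟫ * ω x z ≤ 0 := mul_nonpos_of_nonpos_of_nonneg hinner hxz.le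
    have h₂ : 0 < ‖x‖ ^ 2 * ω y z := by positivity
    linarith [o.inner_mul_areaForm_sub x y z]
  exact neg_of_mul_neg_right hmul hxy.le

lemma inner_pos_of_norm_sub_eq_norm {F : Type*} [NormedAddCommGroup F] [InnerProductSpace ℝ F]
    {x y : F} (h : ‖x - y‖ = ‖x‖) (hy : y ≠ 0) : 0 < ⟪x, y⟫ := by
  have hnorm := norm_sub_sq_real x y
  have hypos : 0 < ‖y‖ ^ 2 := by positivity
  rw [h] at hnorm
  linarith

-- If `v` is at the angle `θ` from `u` and `w` at the angle `φ` from `v`, then `v + w` is at the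
-- angle `φ / 2` and `v - u` at `(π - θ) / 2` from `v`, so that `hconverge` says `φ + θ ≤ π`.
lemma inner_sub_neg_of_norm_eq {u v w : E} (huv : ‖u‖ = ‖v‖) (hwv : ‖w‖ = ‖v‖)
    (huv_pos : 0 < ω u v) (hvw_pos : 0 < ω v w) (hconverge : 0 ≤ ω (v + w) (v - u)) :
    ⟪w, u - v⟫ < 0 := by
  have hvu : ω v u = -ω u v := o.areaForm_swap v u
  have hsq_u := o.inner_sq_add_areaForm_sq v u
  have hsq_w := o.inner_sq_add_areaForm_sq v w
  have hinner := o.inner_mul_inner_add_areaForm_mul_areaForm v u w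
  have harea := o.inner_mul_areaForm_sub v u w
  simp only [huv, hwv, hvu] at hsq_u hsq_w hinner harea
  have hN : 0 < ‖v‖ ^ 2 := by
    have hv : v ≠ 0 := by rintro rfl; simp at huv_pos
    positivity
  have hu : 0 < ‖v‖ ^ 2 - ⟪v, u⟫ := by nlinarith
  have hw : 0 < ‖v‖ ^ 2 + ⟪v, w⟫ := by nlinarith
  have hexpand : ω (v + w) (v - u) = ω u v - ω v w + ω u w := by
    simp only [map_add, map_sub, LinearMap.add_apply, o.areaForm_apply_self, hvu,
      o.areaForm_swap w v, o.areaForm_swap w u]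
    ring
  have hslope : ω v w * (‖v‖ ^ 2 - ⟪v, u⟫) ≤ ω u v * (‖v‖ ^ 2 + ⟪v, w⟫) := by
    rw [hexpand] at hconverge
    linarith [mul_nonneg hN.le hconverge]
  have hsine : (‖v‖ ^ 2 - ⟪v, w⟫) * (‖v‖ ^ 2 - ⟪v, u⟫) ≤ ω u v * ω v w := by
    refine le_of_mul_le_mul_left ?_ hw
    linarith [mul_le_mul_of_nonneg_left hslope hvw_pos.le,
      congrArg (fun t => t * (‖v‖ ^ 2 - ⟪v, u⟫)) hsq_w]
  refine neg_of_mul_neg_right ?_ hN.le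
  rw [inner_sub_right, real_inner_comm, real_inner_comm v w]
  linarith [mul_pos hN hu]

/-! ### Orientation of triples of points -/

variable (o) in
/-- Twice the signed area of the triangle `x y z`; it is positive iff `z` is to the left of the
line directed from `x` to `y`. -/
noncomputable def turn (x y z : E) : ℝ := ω (y - x) (z - x)

lemma turn_rotate (x y z : E) : turn o y z x = turn o x y z := by
  simp only [turn, map_sub, LinearMap.sub_apply, o.areaForm_apply_self,
    o.areaForm_swap z x, o.areaForm_swap z y]
  ring

lemma turn_swap (x y z : E) : turn o x z y = -turn o x y z :=
  o.areaForm_swap _ _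

lemma turn_eq_areaForm_sub (x y z : E) : turn o x y z = ω (y - x) (z - y) := by
  rw [← sub_sub_sub_cancel_right z y x, map_sub, o.areaForm_apply_self, sub_zero, turn]

lemma turn_reverse (x y z : E) : turn o z y x = -turn o x y z := by
  rw [turn_swap, ← turn_rotate]

lemma collinear_of_turn_eq_zero {x y z : E} (h : turn o x y z = 0) : Collinear ℝ {x, y, z} := by
  rcases eq_or_ne y x with rfl | hyx
  · simpa only [Set.insert_eq_of_mem (Set.mem_insert _ _)] using collinear_pair ℝ y z
  · have hnorm : ‖y - x‖ ^ 2 ≠ 0 := pow_ne_zero 2 (norm_ne_zero_iff.2 (sub_ne_zero.2 hyx))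
    have hparallel : ⟪y - x, z - x⟫ • (y - x) = ‖y - x‖ ^ 2 • (z - x) := by
      have hrot := areaForm_smul_add_smul_add_smul_eq_zero o (y - x) (z - x)
        (o.rightAngleRotation (y - x))
      rw [turn] at h
      rwa [o.areaForm_rightAngleRotation_right, o.areaForm_rightAngleRotation_left, h, zero_smul,
        add_zero, real_inner_self_eq_norm_sq, neg_smul, add_neg_eq_zero, real_inner_comm] at hrot
    have hz : z = (⟪y - x, z - x⟫ / ‖y - x‖ ^ 2) • (y - x) +ᵥ x := by
      rw [div_eq_inv_mul, mul_smul, hparallel, inv_smul_smul₀ hnorm, vadd_eq_add, sub_add_cancel]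
    refine (collinear_iff_of_mem (Set.mem_insert x _)).2 ⟨y - x, ?_⟩
    rintro w (rfl | rfl | rfl)
    exacts [⟨0, by simp⟩, ⟨1, by simp⟩, ⟨_, hz⟩]

variable {ι : Type*} {p : ι → E}

lemma turn_ne_zero_of_convexIndependent (hp : ConvexIndependent ℝ p) {i j k : ι} (hij : i ≠ j)
    (hjk : j ≠ k) (hki : k ≠ i) : turn o (p i) (p j) (p k) ≠ 0 :=
  fun h => not_collinear_of_convexIndependent hp hij hjk hki (collinear_of_turn_eq_zero h)

lemma ne_of_turn_pos {x y z : E} (h : 0 < turn o x y z) : x ≠ y ∧ y ≠ z ∧ z ≠ x := by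
  refine ⟨?_, ?_, ?_⟩ <;> rintro rfl <;>
    simp only [turn, sub_self, map_zero, LinearMap.zero_apply, o.areaForm_apply_self,
      lt_self_iff_false] at h

lemma turn_pos_trans (hp : ConvexIndependent ℝ p) {i j k l : ι}
    (hjk : 0 < turn o (p i) (p j) (p k)) (hkl : 0 < turn o (p i) (p k) (p l)) :
    0 < turn o (p i) (p j) (p l) := by
  by_contra! hjl
  have hlj : 0 ≤ turn o (p i) (p l) (p j) := by rw [turn_swap]; linarith
  refine sum_smul_sub_ne_zero_of_convexIndependent hp (t := Finset.univ) (i := i) (f := ![j, k, l])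
    (w := ![turn o (p i) (p k) (p l), turn o (p i) (p l) (p j), turn o (p i) (p j) (p k)])
    ?_ ?_ ?_ ?_
  · simp [Fin.forall_fin_succ, hkl.le, hlj, hjk.le]
  · simp only [Fin.sum_univ_three, Matrix.cons_val]
    linarith
  · have hj : j ≠ i := by rintro rfl; exact (ne_of_turn_pos hjk).1 rfl
    have hk : k ≠ i := by rintro rfl; exact (ne_of_turn_pos hjk).2.2 rfl
    have hl : l ≠ i := by rintro rfl; exact (ne_of_turn_pos hkl).2.2 rfl
    simp [Fin.forall_fin_succ, hj, hk, hl]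
  · simpa only [Fin.sum_univ_three, Matrix.cons_val, turn] using
      areaForm_smul_add_smul_add_smul_eq_zero o (p j - p i) (p k - p i) (p l - p i)

variable (o) in
/-- Convexly independent points in an oriented plane, in counterclockwise circular order. -/
noncomputable abbrev circularOrderOfConvexIndependent (hp : ConvexIndependent ℝ p) :
    CircularOrder ι where
  btw i j k := 0 ≤ turn o (p i) (p j) (p k)
  sbtw i j k := 0 < turn o (p i) (p j) (p k)
  btw_refl i := by simp only [turn, sub_self, map_zero, le_refl]
  btw_cyclic_left h := by rwa [turn_rotate]
  sbtw_iff_btw_not_btw {i j k} := by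
    rw [turn_reverse (p i), not_le, neg_lt_zero]
    exact ⟨fun h => ⟨h.le, h⟩, And.right⟩
  sbtw_trans_left {i j k l} hijk hjlk := by
    rw [← turn_rotate, ← turn_rotate] at hijk hjlk ⊢
    exact turn_pos_trans hp hijk hjlk
  btw_antisymm {i j k} hijk hkji := by
    by_contra! hne
    rw [turn_reverse, neg_nonneg] at hkji
    exact turn_ne_zero_of_convexIndependent hp hne.1 hne.2.1 hne.2.2 (hkji.antisymm hijk)
  btw_total i j k := by
    rw [turn_reverse (p i), neg_nonneg]
    exact le_total _ _

variable (o p) in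
/-- On the left of the line directed from `p i` to `p j`, no ray from `p i` to a point of the family
diverges from a ray from `p j` to a point of the family. -/
def IsNarrow (i j : ι) : Prop :=
  ∀ k l, 0 < turn o (p i) (p j) (p k) → 0 < turn o (p i) (p j) (p l) →
    0 ≤ ω (p k - p i) (p l - p j)

lemma isNarrow_or_isNarrow_swap (hp : ConvexIndependent ℝ p) (i j : ι) :
    IsNarrow o p i j ∨ IsNarrow o p j i := by
  rw [or_iff_not_imp_left]
  intro hij c d hc hd
  obtain ⟨a, b, ha, hb, hab⟩ : ∃ a b, 0 < turn o (p i) (p j) (p a) ∧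
      0 < turn o (p i) (p j) (p b) ∧ ω (p a - p i) (p b - p j) < 0 := by
    simpa only [IsNarrow, not_forall, not_le, exists_prop] using hij
  have hda : 0 < turn o (p i) (p d) (p a) :=
    turn_pos_trans hp (by rwa [turn_rotate]) ha
  have hbc : 0 < turn o (p j) (p b) (p c) :=
    turn_pos_trans hp (by rwa [turn_rotate]) hc
  refine (areaForm_pos_of_separated (e := p j - p i) (a := p a - p i) (b := p b - p j) ha
    (by rwa [← turn_eq_areaForm_sub]) ?_ ?_ ?_ hbc hda).le
  · rwa [← neg_sub (p i) (p j), map_neg, o.areaForm_swap, neg_neg, ← turn]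
  · rwa [← turn, turn_rotate]
  · rwa [o.areaForm_swap, neg_pos]

lemma inner_neg_of_isNarrow {i j k l : ι} {r : ℝ} (hnarrow : IsNarrow o p i j)
    (hij : dist (p i) (p j) = r) (hik : dist (p i) (p k) = r) (hlk : dist (p l) (p k) = r)
    (hijk : 0 < turn o (p i) (p j) (p k)) (hikl : 0 < turn o (p i) (p k) (p l))
    (hijl : 0 < turn o (p i) (p j) (p l)) :
    ⟪p l - p k, p j - p k⟫ < 0 := by
  rw [← sub_sub_sub_cancel_right (p j) (p k) (p i)]
  refine inner_sub_neg_of_norm_eq (o := o) ?_ ?_ hijk (by rwa [← turn_eq_areaForm_sub]) ?_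
  · rw [← dist_eq_norm', ← dist_eq_norm', hij, hik]
  · rw [← dist_eq_norm, ← dist_eq_norm', hlk, hik]
  · simpa only [sub_add_sub_cancel', sub_sub_sub_cancel_right] using hnarrow l k hijl hijk

lemma turn_pos_of_isNarrow (hp : ConvexIndependent ℝ p) {i i' j j' k : ι} {r : ℝ}
    (hnarrow : IsNarrow o p i j) (hij : dist (p i) (p j) = r) (hik : dist (p i) (p k) = r)
    (hij' : dist (p i') (p j') = r) (hik' : dist (p i') (p k) = r)
    (hijk : 0 < turn o (p i) (p j) (p k)) (hijk' : 0 < turn o (p i') (p j') (p k))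
    (hiki' : 0 < turn o (p i) (p k) (p i')) : 0 < turn o (p j') (p j) (p k) := by
  have hobtuse : ⟪p i' - p k, p j - p k⟫ < 0 := inner_neg_of_isNarrow hnarrow hij hik hik' hijk
    hiki' (turn_pos_trans hp hijk hiki')
  have hacute : 0 < ⟪p i' - p k, p j' - p k⟫ := by
    refine inner_pos_of_norm_sub_eq_norm ?_ (sub_ne_zero.2 (ne_of_turn_pos hijk').2.1)
    rw [sub_sub_sub_cancel_right, ← dist_eq_norm, ← dist_eq_norm, hij', hik']
  have hjj' : j' ≠ j := by rintro rfl; exact hobtuse.not_gt hacute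
  have hjk : j ≠ k := by rintro rfl; exact (ne_of_turn_pos hijk).2.1 rfl
  have hkj' : k ≠ j' := by rintro rfl; exact (ne_of_turn_pos hijk').2.1 rfl
  by_contra! hle
  have hkjj' : 0 < turn o (p k) (p j) (p j') := by
    rw [turn_reverse, neg_pos]
    exact hle.lt_of_ne (turn_ne_zero_of_convexIndependent hp hjj' hjk hkj')
  have hki'j : 0 < turn o (p k) (p i') (p j) := by
    refine turn_pos_trans hp (k := i) ?_ ?_
    · rwa [turn_rotate]
    · rwa [← turn_rotate]
  exact hacute.not_gt (inner_neg_of_areaForm_pos hki'j hkjj' (turn_pos_trans hp hki'j hkjj')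
    hobtuse.le)

variable (o) in
lemma gapsWiden_dist_eq_and_isNarrow (hp : ConvexIndependent ℝ p) (r : ℝ) :
    letI := circularOrderOfConvexIndependent o hp
    GapsWiden fun i j => dist (p i) (p j) = r ∧ IsNarrow o p i j :=
  fun _ _ _ _ _ hij hik hij' hik' hijk hijk' hiki' =>
    turn_pos_of_isNarrow hp hij.2 hij.1 hik.1 hij'.1 hik'.1 hijk hijk' hiki'

theorem ncard_dist_eq_le [Finite ι] (hp : ConvexIndependent ℝ p) {r : ℝ} (hr : r ≠ 0) :
    {e : ι × ι | dist (p e.1) (p e.2) = r}.ncard ≤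
      2 * (2 * (Nat.card ι * ((Nat.card ι).size + 1))) := by
  have : FiniteDimensional ℝ E := .of_fact_finrank_eq_two
  let o : Orientation ℝ E (Fin 2) := (finBasisOfFinrankEq ℝ E Fact.out).orientation
  let := circularOrderOfConvexIndependent o hp
  let D : Set (ι × ι) := {e | dist (p e.1) (p e.2) = r ∧ IsNarrow o p e.1 e.2}
  have hD : D.ncard ≤ 2 * (Nat.card ι * ((Nat.card ι).size + 1)) :=
    ncard_le_of_gapsWiden (fun i h => hr (by rw [← h.1, dist_self]))
      (gapsWiden_dist_eq_and_isNarrow o hp r)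
  have hcover : {e : ι × ι | dist (p e.1) (p e.2) = r} ⊆ D ∪ Prod.swap '' D := by
    rintro ⟨i, j⟩ hij
    rcases isNarrow_or_isNarrow_swap (o := o) hp i j with h | h
    · exact .inl ⟨hij, h⟩
    · exact .inr ⟨(j, i), ⟨(dist_comm _ _).trans hij, h⟩, rfl⟩
  calc {e : ι × ι | dist (p e.1) (p e.2) = r}.ncard
    _ ≤ (D ∪ Prod.swap '' D).ncard := Set.ncard_le_ncard hcover
    _ ≤ D.ncard + (Prod.swap '' D).ncard := Set.ncard_union_le _ _
    _ = 2 * D.ncard := by rw [Set.ncard_image_of_injective _ Prod.swap_injective, two_mul]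
    _ ≤ _ := Nat.mul_le_mul_left 2 hD

end Orientation

theorem unit_distances_convex_position_general {E : Type*} [NormedAddCommGroup E]
    [InnerProductSpace ℝ E] [Fact (finrank ℝ E = 2)] {P : Finset E}
    (hP : ConvexIndependent ℝ ((↑) : P → E)) {r : ℝ} (hr : r ≠ 0) :
    ({e : E × E | e.1 ∈ P ∧ e.2 ∈ P ∧ dist e.1 e.2 = r}.ncard : ℝ) ≤
      2 * (2 * P.card * Real.logb 2 P.card + 4 * P.card) := by
  have himage : {e : E × E | e.1 ∈ P ∧ e.2 ∈ P ∧ dist e.1 e.2 = r} =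
      Prod.map (↑) (↑) '' {e : P × P | dist (e.1 : E) e.2 = r} := by
    ext ⟨x, y⟩
    simp [and_left_comm, and_comm]
  have hcard : {e : P × P | dist (e.1 : E) e.2 = r}.ncard ≤
      2 * (2 * (P.card * (P.card.size + 1))) := by
    simpa only [Nat.card_eq_finsetCard] using ncard_dist_eq_le hP hr
  rw [himage, Set.ncard_image_of_injective _
    (Subtype.val_injective.prodMap Subtype.val_injective)]
  calc ({e : P × P | dist (e.1 : E) e.2 = r}.ncard : ℝ)
    _ ≤ 2 * (2 * (P.card * (P.card.size + 1))) := by exact_mod_cast hcard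
    _ ≤ 2 * (2 * (P.card * (Real.logb 2 P.card + 1 + 1))) := by
        gcongr
        exact size_le_logb_add_one _
    _ = 2 * (2 * P.card * Real.logb 2 P.card + 4 * P.card) := by ring

/-- There is an absolute constant `C` such that every set `P` of `n ≥ 2` points in convex
position in the plane determines at most `2n·log₂ n + C·n` pairs `{p, q}` at Euclidean
distance exactly `1`.  (Each unordered pair corresponds to exactly two ordered pairs, whence
the factor `2` on the right.) -/
theorem unit_distances_convex_position :
    ∃ C : ℝ, ∀ P : Finset (EuclideanSpace ℝ (Fin 2)),
      2 ≤ P.card →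
      ConvexPosition (P : Set (EuclideanSpace ℝ (Fin 2))) →
      ({e : EuclideanSpace ℝ (Fin 2) × EuclideanSpace ℝ (Fin 2) |
          e.1 ∈ P ∧ e.2 ∈ P ∧ dist e.1 e.2 = 1}.ncard : ℝ) ≤
        2 * (2 * P.card * Real.logb 2 P.card + C * P.card) := by
  have : Fact (finrank ℝ (EuclideanSpace ℝ (Fin 2)) = 2) := ⟨finrank_euclideanSpace_fin⟩
  exact ⟨4, fun P _ hP => unit_distances_convex_position_general
    ((convex_convexHull ℝ _).convexIndependent_extremePoints.mono hP) one_ne_zero⟩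
end

section
/- Let G be a path-restricted ordered bipartite graph and let v be a vertex of G. Then for every vertex w of G there is at most one decreasing forward path in G from v to w; equivalently, two decreasing forward paths originating at v never meet again after diverging, so the union T_r(v) of all decreasing forward paths from v is a tree. The same statements hold for increasing forward paths and T_l(v). -/
open List

/-- A decreasing forward path: a path whose `U`-vertices and `V`-vertices are both visited in
strictly decreasing order. -/
def IsDecForwardPath {α β : Type*} [Preorder α] [Preorder β]
    (E : Set (α × β)) (ws : List (α ⊕ β)) : Prop :=
  IsPathList E ws ∧ (uVerts ws).Chain' (· > ·) ∧ (vVerts ws).Chain' (· > ·)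

/-- An increasing forward path: a path whose `U`-vertices and `V`-vertices are both visited in
strictly increasing order. -/
def IsIncForwardPath {α β : Type*} [Preorder α] [Preorder β]
    (E : Set (α × β)) (ws : List (α ⊕ β)) : Prop :=
  IsPathList E ws ∧ (uVerts ws).Chain' (· < ·) ∧ (vVerts ws).Chain' (· < ·)

/-!
Reversing a decreasing forward path gives an increasing one, and exchanging the two sides of the
graph preserves the absence of back edges, so it suffices to consider two increasing forward paths
`P = a x …` and `Q = a y …` with `a ∈ U` that diverge at `a` and end at the same vertex `w`.
Suppose `x < y`. As soon as `P` has a `V`-vertex that is at least `y`, the edge `a y` is a back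
edge to `P`; hence all `V`-vertices of `P` are below `y`, whereas those of `Q` are at least `y`.
So `w` is not in `V`. If `w ∈ U`, its predecessor `e` on `Q` satisfies `y ≤ e`, hence `P` followed
by `e` is again an increasing forward path, and `a y` is a back edge to it.
-/

section OrderedBipartiteGraph

variable {α β : Type*} {E : Set (α × β)} {ws p q : List (α ⊕ β)}

section VertexLists

lemma uVerts_concat_inr (v : β) : uVerts (ws ++ [Sum.inr v]) = uVerts ws := by
  simp [uVerts]

lemma vVerts_concat_inr (v : β) : vVerts (ws ++ [Sum.inr v]) = vVerts ws ++ [v] := by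
  simp [vVerts]

lemma mem_vVerts {v : β} : v ∈ vVerts ws ↔ Sum.inr v ∈ ws := by
  simp [vVerts]

lemma uVerts_map_swap : uVerts (ws.map Sum.swap) = vVerts ws := by
  simp [uVerts, vVerts, filterMap_map]

lemma vVerts_map_swap : vVerts (ws.map Sum.swap) = uVerts ws := by
  simp [uVerts, vVerts, filterMap_map]

lemma uVerts_reverse : uVerts ws.reverse = (uVerts ws).reverse := filterMap_reverse

lemma vVerts_reverse : vVerts ws.reverse = (vVerts ws).reverse := filterMap_reverse

lemma internalVerts_map_swap :
    internalVerts (ws.map Sum.swap) = (internalVerts ws).map Sum.swap := by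
  simp [internalVerts]

lemma internalVerts_cons_cons (a b : α ⊕ β) (hne : ws ≠ []) :
    internalVerts (a :: b :: ws) = b :: ws.dropLast :=
  dropLast_cons_of_ne_nil hne

lemma listLeast_cons_of_pairwise {γ : Type*} [Preorder γ] {x : γ} {l : List γ}
    (h : (x :: l).Pairwise (· < ·)) : ListLeast (x :: l) x :=
  ⟨mem_cons_self, forall_mem_cons.2 ⟨le_rfl, fun _ hy => (rel_of_pairwise_cons h hy).le⟩⟩

lemma eq_nil_of_nodup_of_getLast?_cons_eq {γ : Type*} {x : γ} {l : List γ}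
    (hnodup : (x :: l).Nodup) (hlast : (x :: l).getLast? = some x) : l = [] := by
  rcases l with _ | ⟨y, l⟩
  · rfl
  · rw [getLast?_cons_cons] at hlast
    exact ((nodup_cons.1 hnodup).1 (mem_of_getLast? hlast)).elim

end VertexLists

section Adjacency

lemma BipAdj.symm {a b : α ⊕ β} (h : BipAdj E a b) : BipAdj E b a := by
  rcases a with a | a <;> rcases b with b | b <;> exact h

lemma bipAdj_swap {a b : α ⊕ β} :
    BipAdj (Prod.swap ⁻¹' E) a.swap b.swap ↔ BipAdj E a b := by
  rcases a with a | a <;> rcases b with b | b <;> rfl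

lemma isPathList_map_swap : IsPathList (Prod.swap ⁻¹' E) (ws.map Sum.swap) ↔ IsPathList E ws := by
  have hchain : (ws.map Sum.swap).IsChain (BipAdj (Prod.swap ⁻¹' E)) ↔ ws.IsChain (BipAdj E) := by
    simp only [isChain_map, bipAdj_swap]
  have hnodup : (ws.map Sum.swap).Nodup ↔ ws.Nodup :=
    nodup_map_iff Sum.swap_leftInverse.injective
  exact and_congr (not_congr map_eq_nil_iff) (and_congr hchain hnodup)

lemma IsPathList.reverse (h : IsPathList E ws) : IsPathList E ws.reverse :=
  ⟨reverse_ne_nil_iff.2 h.1, isChain_reverse.2 (h.2.1.imp fun _ _ => BipAdj.symm),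
    nodup_reverse.2 h.2.2⟩

lemma exists_inr_mem_eq_or_bipAdj_getLast {v : β} {w : α ⊕ β}
    (hchain : (Sum.inr v :: ws).IsChain (BipAdj E))
    (hlast : (Sum.inr v :: ws).getLast? = some w) :
    ∃ e, Sum.inr e ∈ Sum.inr v :: ws ∧ (w = Sum.inr e ∨ BipAdj E w (Sum.inr e)) := by
  obtain ⟨pre, hpre⟩ := getLast?_eq_some_iff.1 hlast
  rcases w with u | e
  · rcases eq_nil_or_concat' pre with rfl | ⟨pre, z, rfl⟩
    · simp at hpre
    · rw [hpre, append_assoc, singleton_append] at hchain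
      have hadj : BipAdj E z (Sum.inl u) := (isChain_append_cons_cons.1 hchain).2.1
      rcases z with z | e
      · exact hadj.elim
      · exact ⟨e, by simp [hpre], Or.inr hadj⟩
  · exact ⟨e, mem_of_getLast? hlast, Or.inl rfl⟩

end Adjacency

section ForwardPaths

variable [Preorder α] [Preorder β]

lemma isForwardPath_map_swap :
    IsForwardPath (Prod.swap ⁻¹' E) (ws.map Sum.swap) ↔ IsForwardPath E ws := by
  simp only [IsForwardPath, isPathList_map_swap, uVerts_map_swap, vVerts_map_swap, and_comm]

lemma isIncForwardPath_map_swap :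
    IsIncForwardPath (Prod.swap ⁻¹' E) (ws.map Sum.swap) ↔ IsIncForwardPath E ws := by
  simp only [IsIncForwardPath, isPathList_map_swap, uVerts_map_swap, vVerts_map_swap, and_comm]

lemma hasBackEdge_map_swap :
    HasBackEdge (Prod.swap ⁻¹' E) (ws.map Sum.swap) ↔ HasBackEdge E ws := by
  simp only [HasBackEdge, internalVerts_map_swap, uVerts_map_swap, vVerts_map_swap,
    Set.mem_preimage, Prod.swap_prod_mk]
  exact or_comm

lemma IsPRBG.swap (hG : IsPRBG E) : IsPRBG (Prod.swap ⁻¹' E) := fun _ hws hback =>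
  hG _ (isForwardPath_map_swap.2 hws) (hasBackEdge_map_swap.2 hback)

lemma IsDecForwardPath.isIncForwardPath_reverse (h : IsDecForwardPath E ws) :
    IsIncForwardPath E ws.reverse := by
  refine ⟨h.1.reverse, ?_, ?_⟩
  · rw [uVerts_reverse]
    exact isChain_reverse.2 h.2.1
  · rw [vVerts_reverse]
    exact isChain_reverse.2 h.2.2

namespace IsIncForwardPath

lemma isForwardPath (h : IsIncForwardPath E ws) : IsForwardPath E ws := ⟨h.1, Or.inl h.2⟩

lemma isChain (h : IsIncForwardPath E ws) : ws.IsChain (BipAdj E) := h.1.2.1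

lemma nodup (h : IsIncForwardPath E ws) : ws.Nodup := h.1.2.2

lemma pairwise_uVerts (h : IsIncForwardPath E ws) : (uVerts ws).Pairwise (· < ·) :=
  isChain_iff_pairwise.1 h.2.1

lemma pairwise_vVerts (h : IsIncForwardPath E ws) : (vVerts ws).Pairwise (· < ·) :=
  isChain_iff_pairwise.1 h.2.2

lemma of_cons {a : α ⊕ β} (h : IsIncForwardPath E (a :: ws)) (hne : ws ≠ []) :
    IsIncForwardPath E ws := by
  have hsub : ws <+ a :: ws := sublist_cons_self a ws
  exact ⟨⟨hne, h.isChain.tail, h.nodup.sublist hsub⟩,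
    (h.pairwise_uVerts.sublist (hsub.filterMap _)).isChain,
    (h.pairwise_vVerts.sublist (hsub.filterMap _)).isChain⟩

lemma concat_inr {w : α ⊕ β} {e : β} (h : IsIncForwardPath E ws)
    (hlast : ws.getLast? = some w) (hadj : BipAdj E w (Sum.inr e))
    (hlt : ∀ f, Sum.inr f ∈ ws → f < e) : IsIncForwardPath E (ws ++ [Sum.inr e]) := by
  have hchain : (ws ++ [Sum.inr e]).IsChain (BipAdj E) :=
    h.isChain.append (isChain_singleton _) (by simpa [hlast] using hadj)
  have hnodup : (ws ++ [Sum.inr e]).Nodup :=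
    concat_eq_append ▸ h.nodup.concat fun hmem => (hlt e hmem).false
  have hincV : (vVerts ws ++ [e]).IsChain (· < ·) :=
    IsChain.append h.2.2 (isChain_singleton _) fun f hf g hg => by
      obtain rfl : e = g := by simpa using hg
      exact hlt f (mem_vVerts.1 (mem_of_getLast? hf))
  exact ⟨⟨by simp, hchain, hnodup⟩, (uVerts_concat_inr e).symm ▸ h.2.1,
    (vVerts_concat_inr e).symm ▸ hincV⟩

end IsIncForwardPath

end ForwardPaths

section Divergence

variable {a : α} {x y : β} {w : α ⊕ β}

lemma IsIncForwardPath.hasBackEdge [Preorder α] [LinearOrder β] {f : β}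
    (hp : IsIncForwardPath E (Sum.inl a :: Sum.inr x :: p)) (hf : Sum.inr f ∈ p)
    (hay : (a, y) ∈ E) (hxy : x < y) (hyf : y ≤ f) :
    HasBackEdge E (Sum.inl a :: Sum.inr x :: p) := by
  have hvVerts : (x :: vVerts p).Pairwise (· < ·) := hp.pairwise_vVerts
  have hinternal : (x :: vVerts p.dropLast).Pairwise (· < ·) :=
    hvVerts.sublist (((dropLast_sublist p).filterMap _).cons_cons x)
  obtain ⟨g, hg, hmax⟩ :=
    Set.exists_max_image {v | v ∈ x :: vVerts p} id (finite_toSet _) ⟨x, mem_cons_self⟩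
  have hfg : f ≤ g := hmax f (mem_cons_of_mem x (mem_vVerts.2 hf))
  refine Or.inl ⟨a, x, g, x, y, listLeast_cons_of_pairwise hp.pairwise_uVerts,
    listLeast_cons_of_pairwise hvVerts, ⟨hg, hmax⟩, ?_, hay, hxy.le, hyf.trans hfg, hxy⟩
  rw [internalVerts_cons_cons _ _ (ne_nil_of_mem hf)]
  exact listLeast_cons_of_pairwise hinternal

namespace IsPRBG

lemma lt_of_inr_mem [Preorder α] [LinearOrder β] {f : β} (hG : IsPRBG E)
    (hp : IsIncForwardPath E (Sum.inl a :: Sum.inr x :: p)) (hay : (a, y) ∈ E) (hxy : x < y)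
    (hf : Sum.inr f ∈ Sum.inl a :: Sum.inr x :: p) : f < y := by
  obtain rfl | hf : f = x ∨ Sum.inr f ∈ p := by simpa using hf
  · exact hxy
  · by_contra! hyf
    exact hG _ hp.isForwardPath (hp.hasBackEdge hf hay hxy hyf)

lemma lt_of_bipAdj_getLast [Preorder α] [LinearOrder β] {e : β} (hG : IsPRBG E)
    (hp : IsIncForwardPath E (Sum.inl a :: Sum.inr x :: p)) (hay : (a, y) ∈ E) (hxy : x < y)
    (hlast : (Sum.inl a :: Sum.inr x :: p).getLast? = some w) (hadj : BipAdj E w (Sum.inr e)) :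
    e < y := by
  by_contra! hye
  have hext : IsIncForwardPath E (Sum.inl a :: Sum.inr x :: (p ++ [Sum.inr e])) :=
    hp.concat_inr hlast hadj fun f hf => (hG.lt_of_inr_mem hp hay hxy hf).trans_le hye
  exact (hG.lt_of_inr_mem hext hay hxy (by simp)).not_ge hye

lemma second_le_of_getLast_eq [Preorder α] [LinearOrder β] (hG : IsPRBG E)
    (hp : IsIncForwardPath E (Sum.inl a :: Sum.inr x :: p))
    (hq : IsIncForwardPath E (Sum.inl a :: Sum.inr y :: q))
    (hpw : (Sum.inl a :: Sum.inr x :: p).getLast? = some w)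
    (hqw : (Sum.inl a :: Sum.inr y :: q).getLast? = some w) : y ≤ x := by
  by_contra! hxy
  obtain ⟨hay, hchain⟩ := isChain_cons_cons.1 hq.isChain
  rw [getLast?_cons_cons] at hqw
  obtain ⟨e, he, hwe⟩ := exists_inr_mem_eq_or_bipAdj_getLast hchain hqw
  have hye : y ≤ e :=
    (listLeast_cons_of_pairwise hq.pairwise_vVerts).2 e (mem_vVerts (ws := Sum.inr y :: q).2 he)
  have hey : e < y := by
    rcases hwe with rfl | hadj
    · exact hG.lt_of_inr_mem hp hay hxy (mem_of_getLast? hpw)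
    · exact hG.lt_of_bipAdj_getLast hp hay hxy hpw hadj
  exact hey.not_ge hye

lemma second_eq_of_inl_cons [Preorder α] [LinearOrder β] {b c : α ⊕ β} (hG : IsPRBG E)
    (hp : IsIncForwardPath E (Sum.inl a :: b :: p)) (hq : IsIncForwardPath E (Sum.inl a :: c :: q))
    (hpw : (Sum.inl a :: b :: p).getLast? = some w)
    (hqw : (Sum.inl a :: c :: q).getLast? = some w) : b = c := by
  have hab : BipAdj E (Sum.inl a) b := (isChain_cons_cons.1 hp.isChain).1
  have hac : BipAdj E (Sum.inl a) c := (isChain_cons_cons.1 hq.isChain).1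
  rcases b with b | x
  · exact hab.elim
  rcases c with c | y
  · exact hac.elim
  exact congrArg Sum.inr <| le_antisymm
    (hG.second_le_of_getLast_eq hq hp hqw hpw) (hG.second_le_of_getLast_eq hp hq hpw hqw)

variable [LinearOrder α] [LinearOrder β]

lemma second_eq {s b c : α ⊕ β} (hG : IsPRBG E)
    (hp : IsIncForwardPath E (s :: b :: p)) (hq : IsIncForwardPath E (s :: c :: q))
    (hpw : (s :: b :: p).getLast? = some w) (hqw : (s :: c :: q).getLast? = some w) : b = c := by
  rcases s with a | a
  · exact hG.second_eq_of_inl_cons hp hq hpw hqw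
  · refine Sum.swap_leftInverse.injective <| hG.swap.second_eq_of_inl_cons (w := w.swap)
      (isIncForwardPath_map_swap.2 hp) (isIncForwardPath_map_swap.2 hq) ?_ ?_
    · exact (getLast?_map ..).trans (congrArg (Option.map Sum.swap) hpw)
    · exact (getLast?_map ..).trans (congrArg (Option.map Sum.swap) hqw)

lemma incForwardPath_unique {v : α ⊕ β} (hG : IsPRBG E)
    (hp : IsIncForwardPath E p) (hq : IsIncForwardPath E q)
    (hpv : p.head? = some v) (hqv : q.head? = some v)
    (hpw : p.getLast? = some w) (hqw : q.getLast? = some w) : p = q := by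
  induction p generalizing q v with
  | nil => exact (hp.1.1 rfl).elim
  | cons s p ih =>
    obtain rfl : s = v := by simpa using hpv
    obtain ⟨q, rfl⟩ := head?_eq_some_iff.1 hqv
    rcases p with _ | ⟨b, p⟩
    · obtain rfl : s = w := by simpa using hpw
      rw [eq_nil_of_nodup_of_getLast?_cons_eq hq.nodup hqw]
    rcases q with _ | ⟨c, q⟩
    · obtain rfl : s = w := by simpa using hqw
      rw [eq_nil_of_nodup_of_getLast?_cons_eq hp.nodup hpw]
    obtain rfl : b = c := hG.second_eq hp hq hpw hqw
    rw [getLast?_cons_cons] at hpw hqw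
    rw [ih (hp.of_cons (cons_ne_nil _ _)) (hq.of_cons (cons_ne_nil _ _)) rfl rfl hpw hqw]

end IsPRBG

end Divergence

end OrderedBipartiteGraph

/-- In a path-restricted ordered bipartite graph, for any vertices `v` and `w` there is at
most one decreasing forward path from `v` to `w`, and at most one increasing forward path
from `v` to `w`: two forward paths originating at a vertex in the same direction never meet
again after diverging, so `T_r(v)` (resp. `T_l(v)`) is a tree. -/
theorem prbg_forward_paths_unique {α β : Type*} [LinearOrder α] [LinearOrder β]
    (E : Set (α × β)) (hG : IsPRBG E) (v w : α ⊕ β) :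
    (∀ p q : List (α ⊕ β), IsDecForwardPath E p → IsDecForwardPath E q →
      p.head? = some v → q.head? = some v → p.getLast? = some w → q.getLast? = some w →
      p = q) ∧
    (∀ p q : List (α ⊕ β), IsIncForwardPath E p → IsIncForwardPath E q →
      p.head? = some v → q.head? = some v → p.getLast? = some w → q.getLast? = some w →
      p = q) := by
  refine ⟨fun p q hp hq hpv hqv hpw hqw => ?_, fun _ _ => hG.incForwardPath_unique⟩
  refine reverse_injective <|
    hG.incForwardPath_unique (v := w) (w := v) hp.isIncForwardPath_reverse
      hq.isIncForwardPath_reverse ?_ ?_ ?_ ?_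
  · rwa [head?_reverse]
  · rwa [head?_reverse]
  · rwa [getLast?_reverse]
  · rwa [getLast?_reverse]
end

section
/- Let G = (U, V, E) be a path-restricted ordered bipartite graph. Every 3-edge path of G has one endpoint in U and one in V; traversing it starting from its endpoint in V gives vertices a ∈ V, b ∈ U, c ∈ V, d ∈ U with edges ab, bc, cd, and its type is one of four possibilities according to whether a < c or a > c (in the order on V) and whether b < d or b > d (in the order on U). If, for some fixed one of these four types, G contains no 3-edge path of that type, then G is acyclic (contains no cycle). -/
open List

/-- The bipartite graph with edge set `E` contains a cycle: a closed walk on at least four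
distinct vertices. -/
def HasCycle {α β : Type*} (E : Set (α × β)) : Prop :=
  ∃ ws : List (α ⊕ β), 4 ≤ ws.length ∧ ws.Chain' (BipAdj E) ∧ ws.Nodup ∧
    ∃ x y, ws.head? = some x ∧ ws.getLast? = some y ∧ BipAdj E y x

/-- A 3-edge path of type `(s, t)`: vertices `a ∈ V`, `b ∈ U`, `c ∈ V`, `d ∈ U` (distinct)
with edges `ab`, `bc`, `cd`, where `s` records whether `a < c` and `t` whether `b < d`. -/
def HasP3OfType {α β : Type*} [Preorder α] [Preorder β] (E : Set (α × β))
    (s t : Bool) : Prop :=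
  ∃ (a c : β) (b d : α), (b, a) ∈ E ∧ (b, c) ∈ E ∧ (d, c) ∈ E ∧
    (if s then a < c else c < a) ∧ (if t then b < d else d < b)

/-!
Every cycle contains 3-edge paths of all four types. Take `b` to be the least or greatest
`U`-vertex of the cycle, according to the prescribed comparison of `b` with `d`. The two neighbours
of `b` on the cycle are distinct, so they can be named `a` and `c` in the prescribed order. The
second neighbour `d` of `c` on the cycle then lies on the correct side of `b` by extremality.
-/

section CyclicChains

variable {γ : Type*} {r : γ → γ → Prop}

theorem cycle_chain_of_isChain {l : List γ} {x y : γ} (hl : l.IsChain r) (hx : l.head? = some x)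
    (hy : l.getLast? = some y) (hyx : r y x) : (l : Cycle γ).Chain r := by
  have hne : l ≠ [] := List.ne_nil_of_mem (List.mem_of_mem_head? hx)
  have hlast : l.getLast hne = y := List.getLast_of_mem_getLast? hy
  rw [Cycle.chain_ne_nil r hne, hlast, List.isChain_cons]
  exact ⟨fun z hz ↦ Option.some.inj (hx.symm.trans hz) ▸ hyx, hl⟩

theorem exists_eq_coe_cons_of_mem_cycle {s : Cycle γ} {x : γ} (hx : x ∈ s) :
    ∃ l : List γ, s = (x :: l : List γ) := by
  induction s using Quotient.inductionOn' with | _ l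
  obtain ⟨l₁, l₂, rfl⟩ := List.append_of_mem hx
  exact ⟨l₂ ++ l₁, Cycle.coe_eq_coe.2 List.isRotated_append⟩

theorem nontrivial_neighbors_of_cycle_chain [Std.Symm r] {s : Cycle γ} (hs : s.Chain r)
    (hnodup : s.Nodup) (hlen : 3 ≤ s.length) {x : γ} (hx : x ∈ s) :
    {y | y ∈ s ∧ r x y}.Nontrivial := by
  obtain ⟨l, rfl⟩ := exists_eq_coe_cons_of_mem_cycle hx
  obtain ⟨y, m, z, rfl⟩ : ∃ y m z, l = y :: (m ++ [z]) := by
    match l, hlen with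
    | y :: w :: m, _ =>
      exact ⟨y, (w :: m).dropLast, (w :: m).getLast (List.cons_ne_nil w m), by
        rw [List.dropLast_append_getLast]⟩
  have hyz : y ≠ z := by
    rintro rfl
    simp at hnodup
  have hchain : (x :: y :: (m ++ [z, x])).IsChain r := by
    simpa only [Cycle.chain_coe_cons, List.cons_append, List.append_assoc, List.nil_append] using hs
  have hxy : r x y := hchain.rel
  have hzx : r z x := (List.isChain_append_cons_cons (l₁ := x :: y :: m).1 hchain).2.1
  exact ⟨y, ⟨by simp, hxy⟩, z, ⟨by simp, symm_of r hzx⟩, hyz⟩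

end CyclicChains

section BipartiteGraph

variable {α β : Type*} {E : Set (α × β)}

instance : Std.Symm (BipAdj E) where
  symm
    | Sum.inl _, Sum.inr _, h => h
    | Sum.inr _, Sum.inl _, h => h

theorem bipAdj_inl_left_iff {u : α} {w : α ⊕ β} :
    BipAdj E (Sum.inl u) w ↔ ∃ v, (u, v) ∈ E ∧ Sum.inr v = w := by
  cases w <;> simp [BipAdj]

theorem bipAdj_inr_left_iff {v : β} {w : α ⊕ β} :
    BipAdj E (Sum.inr v) w ↔ ∃ u, (u, v) ∈ E ∧ Sum.inl u = w := by
  cases w <;> simp [BipAdj]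

theorem IsPathList.exists_eq_of_length_eq_four {ws : List (α ⊕ β)} (hws : IsPathList E ws)
    (hlen : ws.length = 4) :
    ∃ (a c : β) (b d : α), (b, a) ∈ E ∧ (b, c) ∈ E ∧ (d, c) ∈ E ∧
      (ws = [Sum.inr a, Sum.inl b, Sum.inr c, Sum.inl d] ∨
        ws = [Sum.inl d, Sum.inr c, Sum.inl b, Sum.inr a]) ∧ a ≠ c ∧ b ≠ d := by
  obtain ⟨-, hchain, hnodup⟩ := hws
  obtain ⟨w, x, y, z, rfl⟩ := List.length_eq_four.1 hlen
  obtain ⟨hwx, hxy, hyz⟩ : BipAdj E w x ∧ BipAdj E x y ∧ BipAdj E y z := by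
    simpa using (show List.IsChain (BipAdj E) [w, x, y, z] from hchain)
  obtain ⟨hwy, hxz⟩ : w ≠ y ∧ x ≠ z := by
    constructor <;> rintro rfl <;> simp at hnodup
  rcases w with d | a
  · obtain ⟨c, hdc, rfl⟩ := bipAdj_inl_left_iff.1 hwx
    obtain ⟨b, hbc, rfl⟩ := bipAdj_inr_left_iff.1 hxy
    obtain ⟨a, hba, rfl⟩ := bipAdj_inl_left_iff.1 hyz
    exact ⟨a, c, b, d, hba, hbc, hdc, Or.inr rfl, fun h ↦ hxz (h ▸ rfl), fun h ↦ hwy (h ▸ rfl)⟩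
  · obtain ⟨b, hba, rfl⟩ := bipAdj_inr_left_iff.1 hwx
    obtain ⟨c, hbc, rfl⟩ := bipAdj_inl_left_iff.1 hxy
    obtain ⟨d, hdc, rfl⟩ := bipAdj_inr_left_iff.1 hyz
    exact ⟨a, c, b, d, hba, hbc, hdc, Or.inl rfl, fun h ↦ hwy (h ▸ rfl), fun h ↦ hxz (h ▸ rfl)⟩

theorem exists_inl_mem_of_bipAdj {S : Set (α ⊕ β)} {x y : α ⊕ β} (hx : x ∈ S) (hy : y ∈ S)
    (hxy : BipAdj E x y) : ∃ u : α, Sum.inl u ∈ S := by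
  rcases x with u | v
  · exact ⟨u, hx⟩
  · obtain ⟨u, -, rfl⟩ := bipAdj_inr_left_iff.1 hxy
    exact ⟨u, hy⟩

theorem nontrivial_inr_neighbors {S : Set (α ⊕ β)} {u : α}
    (h : {w | w ∈ S ∧ BipAdj E (Sum.inl u) w}.Nontrivial) :
    {v | Sum.inr v ∈ S ∧ (u, v) ∈ E}.Nontrivial := by
  refine Set.nontrivial_of_image Sum.inr _ (h.mono ?_)
  rintro w ⟨hw, huw⟩
  obtain ⟨v, huv, rfl⟩ := bipAdj_inl_left_iff.1 huw
  exact ⟨v, ⟨hw, huv⟩, rfl⟩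

theorem nontrivial_inl_neighbors {S : Set (α ⊕ β)} {v : β}
    (h : {w | w ∈ S ∧ BipAdj E (Sum.inr v) w}.Nontrivial) :
    {u | Sum.inl u ∈ S ∧ (u, v) ∈ E}.Nontrivial := by
  refine Set.nontrivial_of_image Sum.inl _ (h.mono ?_)
  rintro w ⟨hw, hvw⟩
  obtain ⟨u, huv, rfl⟩ := bipAdj_inr_left_iff.1 hvw
  exact ⟨u, ⟨hw, huv⟩, rfl⟩

end BipartiteGraph

section OrderedBipartiteGraph

variable {α β : Type*} [LinearOrder α]

theorem exists_extremal_mem {A : Set α} (hfin : A.Finite) (hne : A.Nonempty) (t : Bool) :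
    ∃ b ∈ A, ∀ d ∈ A, d ≠ b → if t then b < d else d < b := by
  cases t
  · obtain ⟨b, hb, hmax⟩ := Set.exists_max_image A id hfin hne
    exact ⟨b, hb, fun d hd hdb ↦ (hmax d hd).lt_of_ne hdb⟩
  · obtain ⟨b, hb, hmin⟩ := Set.exists_min_image A id hfin hne
    exact ⟨b, hb, fun d hd hdb ↦ (hmin d hd).lt_of_ne' hdb⟩

theorem exists_mem_lt_or_gt_of_nontrivial {A : Set α} (hA : A.Nontrivial) (s : Bool) :
    ∃ a ∈ A, ∃ c ∈ A, if s then a < c else c < a := by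
  obtain ⟨x, hx, y, hy, hxy⟩ := hA.exists_lt
  cases s
  · exact ⟨y, hy, x, hx, hxy⟩
  · exact ⟨x, hx, y, hy, hxy⟩

variable [LinearOrder β] {E : Set (α × β)}

theorem hasP3OfType_of_nontrivial_neighbors {A : Set α} {B : Set β} (hfin : A.Finite)
    (hne : A.Nonempty) (hA : ∀ u ∈ A, {v | v ∈ B ∧ (u, v) ∈ E}.Nontrivial)
    (hB : ∀ v ∈ B, {u | u ∈ A ∧ (u, v) ∈ E}.Nontrivial) (s t : Bool) :
    HasP3OfType E s t := by
  obtain ⟨b, hbA, hb⟩ := exists_extremal_mem hfin hne t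
  obtain ⟨a, ⟨-, hba⟩, c, ⟨hcB, hbc⟩, hac⟩ := exists_mem_lt_or_gt_of_nontrivial (hA b hbA) s
  obtain ⟨d, ⟨hdA, hdc⟩, hdb⟩ := (hB c hcB).exists_ne b
  exact ⟨a, c, b, d, hba, hbc, hdc, hac, hb d hdA hdb⟩

theorem HasCycle.hasP3OfType (h : HasCycle E) (s t : Bool) : HasP3OfType E s t := by
  obtain ⟨ws, hlen, hpath, hnodup, x, y, hx, hy, hyx⟩ := h
  have hchain : (ws : Cycle (α ⊕ β)).Chain (BipAdj E) := cycle_chain_of_isChain hpath hx hy hyx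
  have hneighbors {w : α ⊕ β} (hw : w ∈ ws) : {z | z ∈ ws ∧ BipAdj E w z}.Nontrivial :=
    nontrivial_neighbors_of_cycle_chain hchain hnodup (Nat.le_of_succ_le hlen) hw
  have hfin : {u : α | Sum.inl u ∈ ws}.Finite :=
    ws.finite_toSet.preimage Sum.inl_injective.injOn
  have hne : {u : α | Sum.inl u ∈ ws}.Nonempty :=
    exists_inl_mem_of_bipAdj (S := {w | w ∈ ws}) (List.mem_of_getLast? hy)
      (List.mem_of_mem_head? hx) hyx
  exact hasP3OfType_of_nontrivial_neighbors (B := {v | Sum.inr v ∈ ws}) hfin hne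
    (fun _ hu ↦ nontrivial_inr_neighbors (hneighbors hu))
    (fun _ hv ↦ nontrivial_inl_neighbors (hneighbors hv)) s t

theorem prbg_forbidden_p3_acyclic_general (E : Set (α × β)) :
    (∀ ws : List (α ⊕ β), IsPathList E ws → ws.length = 4 →
      ∃ (a c : β) (b d : α), (b, a) ∈ E ∧ (b, c) ∈ E ∧ (d, c) ∈ E ∧
        (ws = [Sum.inr a, Sum.inl b, Sum.inr c, Sum.inl d] ∨
          ws = [Sum.inl d, Sum.inr c, Sum.inl b, Sum.inr a]) ∧
        (a < c ∨ c < a) ∧ (b < d ∨ d < b)) ∧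
    (∀ s t : Bool, ¬ HasP3OfType E s t → ¬ HasCycle E) := by
  refine ⟨fun ws hws hlen ↦ ?_, fun s t hfree hcycle ↦ hfree (hcycle.hasP3OfType s t)⟩
  obtain ⟨a, c, b, d, hba, hbc, hdc, heq, hac, hbd⟩ := hws.exists_eq_of_length_eq_four hlen
  exact ⟨a, c, b, d, hba, hbc, hdc, heq, hac.lt_or_gt, hbd.lt_or_gt⟩

end OrderedBipartiteGraph

/-- Every 3-edge path of a (bipartite) path-restricted ordered bipartite graph has one
endpoint in `U` and one in `V`; traversing it from its endpoint in `V` gives `a ∈ V`,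
`b ∈ U`, `c ∈ V`, `d ∈ U` with edges `ab`, `bc`, `cd`, and it has one of four types
according to whether `a < c` or `a > c` and whether `b < d` or `b > d`.  If for some fixed
one of these four types `G` contains no 3-edge path of that type, then `G` is acyclic. -/
theorem prbg_forbidden_p3_acyclic {α β : Type*} [LinearOrder α] [LinearOrder β]
    (E : Set (α × β)) (hG : IsPRBG E) :
    (∀ ws : List (α ⊕ β), IsPathList E ws → ws.length = 4 →
      ∃ (a c : β) (b d : α), (b, a) ∈ E ∧ (b, c) ∈ E ∧ (d, c) ∈ E ∧
        (ws = [Sum.inr a, Sum.inl b, Sum.inr c, Sum.inl d] ∨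
          ws = [Sum.inl d, Sum.inr c, Sum.inl b, Sum.inr a]) ∧
        (a < c ∨ c < a) ∧ (b < d ∨ d < b)) ∧
    (∀ s t : Bool, ¬ HasP3OfType E s t → ¬ HasCycle E) :=
  prbg_forbidden_p3_acyclic_general E
end
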